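/- arXiv:1706.04079 — 2 statements merged into one kernel-verified Lean document; each statement's English description precedes it below -/
import Mathlib

section
/- Let μ be a finite positive Borel measure on [0,1) such that ∫_{[0,1)} t^n log(1/(1-t)) dμ(t) = O(1/n) as n → ∞. Then for every function f in the Bloch space B: (a) ∫_{[0,1)} t^n |f(t)| dμ(t) = O(1/n); (b) for every z in the unit disc 𝔻 the integral I_μ(f)(z) = ∫_{[0,1)} f(t)/(1-tz) dμ(t) converges absolutely and I_μ(f)(z) = ∑_{n=0}^∞ (∫_{[0,1)} t^n f(t) dμ(t)) z^n; and (c) I_μ(f) belongs to the mean Lipschitz space Λ²_{1/2}. -/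
open MeasureTheory Set Metric ENNReal

noncomputable section

namespace PaperHankel

/-- The moment of order `n` of a measure on `[0,1)`:  `μ_n = ∫_{[0,1)} t^n dμ(t)`. -/
def mom (μ : Measure ℝ) (n : ℕ) : ℝ := ∫ t in Ico (0:ℝ) 1, t ^ n ∂μ

/-- The `n`-th Taylor coefficient of `f` at `0`. -/
def tc (f : ℂ → ℂ) (n : ℕ) : ℂ := iteratedDeriv n f 0 / n.factorial

/-- The `n`-th Taylor coefficient of `H_μ f`, namely `∑_k μ_{n+k} a_k`. -/
def hmuCoeff (μ : Measure ℝ) (f : ℂ → ℂ) (n : ℕ) : ℂ :=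
  ∑' k : ℕ, (mom μ (n + k) : ℂ) * tc f k

/-- `H_μ f` is well defined: each coefficient series converges absolutely, and the resulting
power series has radius of convergence at least `1`. -/
def HmuWD (μ : Measure ℝ) (f : ℂ → ℂ) : Prop :=
  (∀ n : ℕ, Summable fun k : ℕ => ‖(mom μ (n + k) : ℂ) * tc f k‖) ∧
  ∀ z ∈ ball (0:ℂ) 1, Summable fun n : ℕ => ‖hmuCoeff μ f n * z ^ n‖

/-- The generalized Hilbert operator induced by the Hankel matrix of moments of `μ`. -/
def Hmu (μ : Measure ℝ) (f : ℂ → ℂ) : ℂ → ℂ :=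
  fun z => ∑' n : ℕ, hmuCoeff μ f n * z ^ n

/-- `I_μ f` is well defined: the defining integral converges absolutely for every `z ∈ 𝔻`. -/
def ImuWD (μ : Measure ℝ) (f : ℂ → ℂ) : Prop :=
  ∀ z ∈ ball (0:ℂ) 1, IntegrableOn (fun t : ℝ => f t / (1 - t * z)) (Ico (0:ℝ) 1) μ

/-- The integral operator `I_μ f (z) = ∫_{[0,1)} f(t)/(1-tz) dμ(t)`. -/
def Imu (μ : Measure ℝ) (f : ℂ → ℂ) : ℂ → ℂ :=
  fun z => ∫ t in Ico (0:ℝ) 1, f t / (1 - t * z) ∂μ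

/-- The `p`-th circle mean `M_p(r,f)` raised into the Hardy norm shape:
`((1/2π) ∫_0^{2π} |f(r e^{iθ})|^p dθ)^{1/p}`. -/
def circMean (p : ℝ) (f : ℂ → ℂ) (r : ℝ) : ℝ :=
  ((2 * Real.pi)⁻¹ * ∫ θ in (0:ℝ)..(2 * Real.pi),
      ‖f (r * Complex.exp (θ * Complex.I))‖ ^ p) ^ (1 / p)

/-- Membership in the Hardy space `H^p`. -/
def MemHardy (p : ℝ) (f : ℂ → ℂ) : Prop :=
  DifferentiableOn ℂ f (ball (0:ℂ) 1) ∧ ∃ M : ℝ, ∀ r ∈ Ico (0:ℝ) 1, circMean p f r ≤ M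

/-- The `H^p` norm. -/
def hardyNorm (p : ℝ) (f : ℂ → ℂ) : ℝ :=
  sSup {x : ℝ | ∃ r ∈ Ico (0:ℝ) 1, x = circMean p f r}

/-- Membership in `H^∞`: analytic and bounded on the unit disc. -/
def MemHinf (f : ℂ → ℂ) : Prop :=
  DifferentiableOn ℂ f (ball (0:ℂ) 1) ∧ ∃ M : ℝ, ∀ z ∈ ball (0:ℂ) 1, ‖f z‖ ≤ M

/-- The `H^∞` norm. -/
def hinfNorm (f : ℂ → ℂ) : ℝ := sSup {x : ℝ | ∃ z ∈ ball (0:ℂ) 1, x = ‖f z‖}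

/-- The mean `M_2(r,g) = ((1/2π) ∫_0^{2π} |g(r e^{iθ})|² dθ)^{1/2}`. -/
def M2 (g : ℂ → ℂ) (r : ℝ) : ℝ :=
  Real.sqrt ((2 * Real.pi)⁻¹ * ∫ θ in (0:ℝ)..(2 * Real.pi),
      ‖g (r * Complex.exp (θ * Complex.I))‖ ^ 2)

/-- Membership in the mean Lipschitz space `Λ²_{1/2}`:
`M_2(r,f') = O((1-r)^{-1/2})` as `r → 1⁻`. -/
def MemLambda (f : ℂ → ℂ) : Prop :=
  DifferentiableOn ℂ f (ball (0:ℂ) 1) ∧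
  ∃ C : ℝ, ∀ r ∈ Ico (0:ℝ) 1, Real.sqrt (1 - r) * M2 (deriv f) r ≤ C

/-- The norm on `Λ²_{1/2}`. -/
def lambdaNorm (f : ℂ → ℂ) : ℝ :=
  ‖f 0‖ + sSup {x : ℝ | ∃ r ∈ Ico (0:ℝ) 1, x = Real.sqrt (1 - r) * M2 (deriv f) r}

/-- `∫_𝔻 |f'(z)|² g(z,a)^s dA(z)` with `g(z,a) = log |(1- ā z)/(z-a)|` and `dA` the
normalized area measure, computed as a lower integral in `[0,∞]`. -/
def qsInt (s : ℝ) (f : ℂ → ℂ) (a : ℂ) : ℝ≥0∞ :=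
  (ENNReal.ofReal Real.pi)⁻¹ * ∫⁻ z in ball (0:ℂ) 1,
    ENNReal.ofReal (‖deriv f z‖ ^ 2 * (Real.log ‖(1 - (starRingEnd ℂ) a * z) / (z - a)‖) ^ s)

/-- Membership in `Q_s`: analytic on `𝔻` with `ρ_{Q_s}(f)² = sup_{a ∈ 𝔻} ∫ ... < ∞`. -/
def MemQs (s : ℝ) (f : ℂ → ℂ) : Prop :=
  DifferentiableOn ℂ f (ball (0:ℂ) 1) ∧ (⨆ a ∈ ball (0:ℂ) 1, qsInt s f a) < ⊤

/-- The norm on `Q_s`, `‖f‖ = |f(0)| + ρ_{Q_s}(f)`. -/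
def qsNorm (s : ℝ) (f : ℂ → ℂ) : ℝ :=
  ‖f 0‖ + Real.sqrt (⨆ a ∈ ball (0:ℂ) 1, qsInt s f a).toReal

/-- The condition `∫_{[0,1)} tⁿ log(1/(1-t)) dμ(t) = O(1/n)`, stated with the lower
integral so that in particular the integrals are finite. -/
def LogMomentBigO (μ : Measure ℝ) : Prop :=
  ∃ C > 0, ∀ n : ℕ, 1 ≤ n →
    (∫⁻ t in Ico (0:ℝ) 1, ENNReal.ofReal (t ^ n * Real.log (1 / (1 - t))) ∂μ) ≤
      ENNReal.ofReal (C / n)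

/-- Membership in the Bloch space. -/
def MemBloch (f : ℂ → ℂ) : Prop :=
  DifferentiableOn ℂ f (ball (0:ℂ) 1) ∧
  ∃ M : ℝ, ∀ z ∈ ball (0:ℂ) 1, (1 - ‖z‖ ^ 2) * ‖deriv f z‖ ≤ M

/-- The Bloch norm `‖f‖ = |f(0)| + ρ_B(f)`. -/
def blochNorm (f : ℂ → ℂ) : ℝ :=
  ‖f 0‖ + sSup {x : ℝ | ∃ z ∈ ball (0:ℂ) 1, x = (1 - ‖z‖ ^ 2) * ‖deriv f z‖}

/-- Membership in the Besov space `B^p`. -/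
def MemBesov (p : ℝ) (f : ℂ → ℂ) : Prop :=
  DifferentiableOn ℂ f (ball (0:ℂ) 1) ∧
  IntegrableOn (fun z : ℂ => (1 - ‖z‖ ^ 2) ^ (p - 2) * ‖deriv f z‖ ^ p) (ball (0:ℂ) 1) volume

/-- The Besov norm `‖f‖ = |f(0)| + ρ_p(f)`. -/
def besovNorm (p : ℝ) (f : ℂ → ℂ) : ℝ :=
  ‖f 0‖ + (Real.pi⁻¹ *
    ∫ z in ball (0:ℂ) 1, (1 - ‖z‖ ^ 2) ^ (p - 2) * ‖deriv f z‖ ^ p) ^ (1 / p)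

/-- `μ` is an `α`-logarithmic `s`-Carleson measure on `[0,1)`. -/
def IsLogCarleson (μ : Measure ℝ) (α s : ℝ) : Prop :=
  ∃ C > 0, ∀ t ∈ Ico (0:ℝ) 1,
    (μ (Ico t 1)).toReal * Real.log (2 / (1 - t)) ^ α ≤ C * (1 - t) ^ s

/-- `μ` is an `s`-Carleson measure on `[0,1)`. -/
def IsCarleson (μ : Measure ℝ) (s : ℝ) : Prop :=
  ∃ C > 0, ∀ t ∈ Ico (0:ℝ) 1, (μ (Ico t 1)).toReal ≤ C * (1 - t) ^ s


/-!
Integrating the Bloch condition along a radius gives `‖f t‖ ≤ K (1 + log (1 / (1 - t)))`. Since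
`t ^ n = (1 - t) t ^ n + t ^ n * t`, where the first summand is at most `1 / n` and
`t ≤ log (1 / (1 - t))`, the hypothesis on the log-weighted moments therefore controls the moments
of `|f|`. Expanding the Cauchy kernel, these bound the Taylor coefficients `c n` of `I_μ f` by
`O(1/n)`, and Parseval's identity on the circle of radius `r` gives
`M_2(r, (I_μ f)')² = ∑ (n + 1)² |c (n + 1)|² r ^ (2 n) ≤ C² / (1 - r)`.
-/

section LogKernel

variable {t : ℝ}

theorem le_log_one_div_one_sub (ht : t < 1) : t ≤ Real.log (1 / (1 - t)) := by
  calc t = 1 - (1 / (1 - t))⁻¹ := by rw [one_div, inv_inv]; ring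
    _ ≤ Real.log (1 / (1 - t)) :=
        Real.one_sub_inv_le_log_of_pos (one_div_pos.2 (sub_pos.2 ht))

theorem one_sub_mul_log_one_div_one_sub_le (ht : t < 1) :
    (1 - t) * Real.log (1 / (1 - t)) ≤ t := by
  have hpos : 0 < 1 - t := sub_pos.2 ht
  calc (1 - t) * Real.log (1 / (1 - t)) ≤ (1 - t) * (1 / (1 - t) - 1) := by
        gcongr
        exact Real.log_le_sub_one_of_pos (one_div_pos.2 hpos)
    _ = t := by field_simp; ring

theorem natCast_mul_one_sub_mul_pow_le_one (h0 : 0 ≤ t) (h1 : t ≤ 1) (n : ℕ) :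
    n * ((1 - t) * t ^ n) ≤ 1 := by
  calc n * ((1 - t) * t ^ n) = (1 - t) * ∑ _i ∈ Finset.range n, t ^ n := by
        rw [Finset.sum_const, Finset.card_range, nsmul_eq_mul]; ring
    _ ≤ (1 - t) * ∑ i ∈ Finset.range n, t ^ i := by
        refine mul_le_mul_of_nonneg_left (Finset.sum_le_sum fun i hi => ?_) (sub_nonneg.2 h1)
        exact pow_le_pow_of_le_one h0 h1 (Finset.mem_range.1 hi).le
    _ = 1 - t ^ n := mul_neg_geom_sum t n
    _ ≤ 1 := sub_le_self 1 (pow_nonneg h0 n)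

theorem pow_le_inv_add_pow_mul_log (ht : t ∈ Ico (0 : ℝ) 1) {n : ℕ} (hn : n ≠ 0) :
    t ^ n ≤ (n : ℝ)⁻¹ + t ^ n * Real.log (1 / (1 - t)) := by
  have hfirst : (1 - t) * t ^ n ≤ (n : ℝ)⁻¹ := by
    rw [← one_div, le_div_iff₀' (by positivity)]
    exact natCast_mul_one_sub_mul_pow_le_one ht.1 ht.2.le n
  calc t ^ n = (1 - t) * t ^ n + t ^ n * t := by ring
    _ ≤ (n : ℝ)⁻¹ + t ^ n * Real.log (1 / (1 - t)) :=
        add_le_add hfirst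
          (mul_le_mul_of_nonneg_left (le_log_one_div_one_sub ht.2) (pow_nonneg ht.1 n))

end LogKernel

section LogGrowth

variable {E : Type*} [NormedAddCommGroup E] {μ : Measure ℝ} {g : ℝ → E}

/-- At most logarithmic growth of `g` on `[0,1)`, as `t → 1⁻`. A single constant controls both the
size at `0` and the growth, so that it is automatically nonnegative. -/
def HasLogGrowth (g : ℝ → E) : Prop :=
  ∃ K : ℝ, ∀ t ∈ Ico (0 : ℝ) 1, ‖g t‖ ≤ K * (1 + Real.log (1 / (1 - t)))

theorem HasLogGrowth.exists_nonneg (hg : HasLogGrowth g) :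
    ∃ K ≥ 0, ∀ t ∈ Ico (0 : ℝ) 1, ‖g t‖ ≤ K * (1 + Real.log (1 / (1 - t))) := by
  obtain ⟨K, hK⟩ := hg
  have hK0 : ‖g 0‖ ≤ K := by simpa using hK 0 ⟨le_rfl, one_pos⟩
  exact ⟨K, (norm_nonneg _).trans hK0, hK⟩

theorem HasLogGrowth.exists_norm_le_add_mul_norm (hg : HasLogGrowth g) :
    ∃ K : ℝ, ∀ t ∈ Ico (0 : ℝ) 1, ‖g t‖ ≤ K + t * ‖g t‖ := by
  obtain ⟨K, hK0, hK⟩ := hg.exists_nonneg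
  refine ⟨K, fun t ht => ?_⟩
  have hpos : 0 ≤ 1 - t := sub_nonneg.2 ht.2.le
  have hbound : (1 - t) * ‖g t‖ ≤ K := by
    calc (1 - t) * ‖g t‖ ≤ (1 - t) * (K * (1 + Real.log (1 / (1 - t)))) := by
          gcongr
          exact hK t ht
      _ = K * (1 - t + (1 - t) * Real.log (1 / (1 - t))) := by ring
      _ ≤ K * (1 - t + t) := by
          gcongr
          exact one_sub_mul_log_one_div_one_sub_le ht.2
      _ = K := by ring
  linarith

theorem HasLogGrowth.exists_pow_mul_norm_le (hg : HasLogGrowth g) :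
    ∃ K ≥ 0, ∀ n : ℕ, n ≠ 0 → ∀ t ∈ Ico (0 : ℝ) 1,
      t ^ n * ‖g t‖ ≤ K / n + 2 * K * (t ^ n * Real.log (1 / (1 - t))) := by
  obtain ⟨K, hK0, hK⟩ := hg.exists_nonneg
  refine ⟨K, hK0, fun n hn t ht => ?_⟩
  calc t ^ n * ‖g t‖ ≤ t ^ n * (K * (1 + Real.log (1 / (1 - t)))) :=
        mul_le_mul_of_nonneg_left (hK t ht) (pow_nonneg ht.1 n)
    _ = K * t ^ n + K * (t ^ n * Real.log (1 / (1 - t))) := by ring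
    _ ≤ K * ((n : ℝ)⁻¹ + t ^ n * Real.log (1 / (1 - t))) +
          K * (t ^ n * Real.log (1 / (1 - t))) := by
        gcongr
        exact pow_le_inv_add_pow_mul_log ht hn
    _ = K / n + 2 * K * (t ^ n * Real.log (1 / (1 - t))) := by ring

theorem HasLogGrowth.exists_lintegral_pow_mul_norm_le (hg : HasLogGrowth g)
    (hμ : μ (Ico 0 1) ≠ ∞) (hmom : LogMomentBigO μ) :
    ∃ C > 0, ∀ n : ℕ, 1 ≤ n →
      (∫⁻ t in Ico (0 : ℝ) 1, ENNReal.ofReal (t ^ n * ‖g t‖) ∂μ) ≤ ENNReal.ofReal (C / n) := by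
  obtain ⟨K, hK0, hK⟩ := hg.exists_pow_mul_norm_le
  obtain ⟨C, hC0, hC⟩ := hmom
  refine ⟨K * μ.real (Ico 0 1) + 2 * K * C + 1, by positivity, fun n hn => ?_⟩
  calc ∫⁻ t in Ico (0 : ℝ) 1, ENNReal.ofReal (t ^ n * ‖g t‖) ∂μ
      ≤ ∫⁻ t in Ico (0 : ℝ) 1, (ENNReal.ofReal (K / n) + ENNReal.ofReal (2 * K) *
          ENNReal.ofReal (t ^ n * Real.log (1 / (1 - t)))) ∂μ := by
        refine setLIntegral_mono' measurableSet_Ico fun t ht => ?_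
        rw [← ENNReal.ofReal_mul (by positivity)]
        exact (ENNReal.ofReal_le_ofReal (hK n (by lia) t ht)).trans ENNReal.ofReal_add_le
    _ = ENNReal.ofReal (K / n) * μ (Ico 0 1) + ENNReal.ofReal (2 * K) *
          ∫⁻ t in Ico (0 : ℝ) 1, ENNReal.ofReal (t ^ n * Real.log (1 / (1 - t))) ∂μ := by
        rw [lintegral_add_left measurable_const, setLIntegral_const,
          lintegral_const_mul' _ _ ENNReal.ofReal_ne_top]
    _ ≤ ENNReal.ofReal (K / n) * ENNReal.ofReal (μ.real (Ico 0 1)) +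
          ENNReal.ofReal (2 * K) * ENNReal.ofReal (C / n) := by
        rw [ofReal_measureReal hμ]
        gcongr
        exact hC n hn
    _ = ENNReal.ofReal (K / n * μ.real (Ico 0 1) + 2 * K * (C / n)) := by
        rw [← ENNReal.ofReal_mul (by positivity), ← ENNReal.ofReal_mul (by positivity),
          ← ENNReal.ofReal_add (by positivity) (by positivity)]
    _ ≤ ENNReal.ofReal ((K * μ.real (Ico 0 1) + 2 * K * C + 1) / n) := by
        refine ENNReal.ofReal_le_ofReal ?_
        calc K / n * μ.real (Ico 0 1) + 2 * K * (C / n)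
            = (K * μ.real (Ico 0 1) + 2 * K * C) / n := by ring
          _ ≤ (K * μ.real (Ico 0 1) + 2 * K * C + 1) / n :=
              div_le_div_of_nonneg_right (lt_add_one _).le n.cast_nonneg

theorem HasLogGrowth.integrableOn (hg : HasLogGrowth g)
    (hgm : AEStronglyMeasurable g (μ.restrict (Ico 0 1)))
    (hμ : μ (Ico 0 1) ≠ ∞) (hmom : LogMomentBigO μ) : IntegrableOn g (Ico 0 1) μ := by
  obtain ⟨K, hK⟩ := hg.exists_norm_le_add_mul_norm
  obtain ⟨C, -, hC⟩ := hg.exists_lintegral_pow_mul_norm_le hμ hmom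
  refine ⟨hgm, (hasFiniteIntegral_iff_norm _).2 ?_⟩
  calc ∫⁻ t in Ico (0 : ℝ) 1, ENNReal.ofReal ‖g t‖ ∂μ
      ≤ ∫⁻ t in Ico (0 : ℝ) 1, (ENNReal.ofReal K + ENNReal.ofReal (t ^ 1 * ‖g t‖)) ∂μ := by
        refine setLIntegral_mono' measurableSet_Ico fun t ht => ?_
        rw [pow_one]
        exact (ENNReal.ofReal_le_ofReal (hK t ht)).trans ENNReal.ofReal_add_le
    _ = ENNReal.ofReal K * μ (Ico 0 1) +
          ∫⁻ t in Ico (0 : ℝ) 1, ENNReal.ofReal (t ^ 1 * ‖g t‖) ∂μ := by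
        rw [lintegral_add_left measurable_const, setLIntegral_const]
    _ < ∞ := ENNReal.add_lt_top.2
        ⟨ENNReal.mul_lt_top ENNReal.ofReal_lt_top hμ.lt_top,
          (hC 1 le_rfl).trans_lt ENNReal.ofReal_lt_top⟩

end LogGrowth

section Bloch

theorem norm_le_add_mul_log_of_one_sub_norm_mul_norm_deriv_le {E : Type*} [NormedAddCommGroup E]
    [NormedSpace ℂ E] {f : ℂ → E} {M : ℝ} (hf : DifferentiableOn ℂ f (ball 0 1))
    (hM : ∀ z ∈ ball (0 : ℂ) 1, (1 - ‖z‖) * ‖deriv f z‖ ≤ M) {z : ℂ} (hz : z ∈ ball (0 : ℂ) 1) :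
    ‖f z‖ ≤ ‖f 0‖ + M * Real.log (1 / (1 - ‖z‖)) := by
  have hz1 : ‖z‖ < 1 := mem_ball_zero_iff.1 hz
  have hnorm : ∀ s ∈ Icc (0 : ℝ) 1, ‖(s : ℂ) * z‖ = s * ‖z‖ := fun s hs => by
    rw [norm_mul, Complex.norm_of_nonneg hs.1]
  have hlt : ∀ s ∈ Icc (0 : ℝ) 1, s * ‖z‖ < 1 := fun s hs =>
    (mul_le_of_le_one_left (norm_nonneg z) hs.2).trans_lt hz1
  have hmem : ∀ s ∈ Icc (0 : ℝ) 1, (s : ℂ) * z ∈ ball (0 : ℂ) 1 := fun s hs =>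
    mem_ball_zero_iff.2 ((hnorm s hs).trans_lt (hlt s hs))
  have hpath : ∀ s ∈ Icc (0 : ℝ) 1,
      HasDerivAt (fun s : ℝ => f (s * z)) (z • deriv f (s * z)) s := fun s hs => by
    have hline : HasDerivAt (fun s : ℝ => (s : ℂ) * z) z s := by
      simpa using (Complex.ofRealCLM.hasDerivAt (x := s)).mul_const z
    exact (hf.differentiableAt (isOpen_ball.mem_nhds (hmem s hs))).hasDerivAt.scomp s hline
  have hlog : ∀ s ∈ Icc (0 : ℝ) 1, HasDerivAt
      (fun s : ℝ => ‖f 0‖ + M * -Real.log (1 - s * ‖z‖)) (M * (‖z‖ / (1 - s * ‖z‖))) s :=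
    fun s hs => by
      have hlin : HasDerivAt (fun s : ℝ => 1 - s * ‖z‖) (-‖z‖) s := by
        simpa using ((hasDerivAt_id s).mul_const ‖z‖).const_sub 1
      simpa [neg_div] using
        ((hlin.log (sub_pos.2 (hlt s hs)).ne').neg.const_mul M).const_add ‖f 0‖
  have hderiv : ∀ s ∈ Icc (0 : ℝ) 1,
      ‖z • deriv f (s * z)‖ ≤ M * (‖z‖ / (1 - s * ‖z‖)) := fun s hs => by
    have hM' := hM _ (hmem s hs)
    rw [hnorm s hs, ← le_div_iff₀' (sub_pos.2 (hlt s hs))] at hM'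
    calc ‖z • deriv f (s * z)‖ = ‖z‖ * ‖deriv f (s * z)‖ := norm_smul _ _
      _ ≤ ‖z‖ * (M / (1 - s * ‖z‖)) := by gcongr
      _ = M * (‖z‖ / (1 - s * ‖z‖)) := by ring
  have hfence := image_norm_le_of_norm_deriv_right_le_deriv_boundary'
    (fun s hs => (hpath s hs).continuousAt.continuousWithinAt)
    (fun s hs => (hpath s (Ico_subset_Icc_self hs)).hasDerivWithinAt)
    (by simp)
    (fun s hs => (hlog s hs).continuousAt.continuousWithinAt)
    (fun s hs => (hlog s (Ico_subset_Icc_self hs)).hasDerivWithinAt)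
    (fun s hs => hderiv s (Ico_subset_Icc_self hs)) (right_mem_Icc.2 zero_le_one)
  simpa [Real.log_inv] using hfence

variable {f : ℂ → ℂ}

theorem MemBloch.hasLogGrowth (hf : MemBloch f) : HasLogGrowth fun t : ℝ => f t := by
  obtain ⟨hd, M, hM⟩ := hf
  have hM0 : 0 ≤ M := by
    refine le_trans ?_ (hM 0 (mem_ball_self one_pos))
    simp
  have hM' : ∀ z ∈ ball (0 : ℂ) 1, (1 - ‖z‖) * ‖deriv f z‖ ≤ M := fun z hz => by
    refine le_trans (mul_le_mul_of_nonneg_right ?_ (norm_nonneg _)) (hM z hz)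
    nlinarith [norm_nonneg z, mem_ball_zero_iff.1 hz]
  refine ⟨‖f 0‖ + M, fun t ht => ?_⟩
  have ht_norm : ‖(t : ℂ)‖ = t := Complex.norm_of_nonneg ht.1
  have hgrow := norm_le_add_mul_log_of_one_sub_norm_mul_norm_deriv_le hd hM'
    (mem_ball_zero_iff.2 (ht_norm.trans_lt ht.2))
  rw [ht_norm] at hgrow
  have hlog : 0 ≤ Real.log (1 / (1 - t)) := ht.1.trans (le_log_one_div_one_sub ht.2)
  nlinarith [mul_nonneg (norm_nonneg (f 0)) hlog]

theorem MemBloch.aestronglyMeasurable (hf : MemBloch f) (μ : Measure ℝ) :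
    AEStronglyMeasurable (fun t : ℝ => f t) (μ.restrict (Ico 0 1)) := by
  refine ContinuousOn.aestronglyMeasurable ?_ measurableSet_Ico
  refine hf.1.continuousOn.comp Complex.continuous_ofReal.continuousOn fun t ht => ?_
  exact mem_ball_zero_iff.2 ((Complex.norm_of_nonneg ht.1).trans_lt ht.2)

end Bloch

section CauchyTransform

variable {μ : Measure ℝ} {g : ℝ → ℂ} {z : ℂ} {t : ℝ}

theorem norm_ofReal_mul_le (ht : t ∈ Ico (0 : ℝ) 1) (z : ℂ) : ‖(t : ℂ) * z‖ ≤ ‖z‖ := by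
  rw [norm_mul, Complex.norm_of_nonneg ht.1]
  exact mul_le_of_le_one_left (norm_nonneg z) ht.2.le

theorem norm_ofReal_pow_mul (ht : t ∈ Ico (0 : ℝ) 1) (n : ℕ) (w : ℂ) :
    ‖(t : ℂ) ^ n * w‖ = t ^ n * ‖w‖ := by
  rw [norm_mul, norm_pow, Complex.norm_of_nonneg ht.1]

theorem norm_ofReal_pow_mul_le (ht : t ∈ Ico (0 : ℝ) 1) (n : ℕ) (w : ℂ) :
    ‖(t : ℂ) ^ n * w‖ ≤ ‖w‖ := by
  rw [norm_ofReal_pow_mul ht]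
  exact mul_le_of_le_one_left (norm_nonneg w) (pow_le_one₀ ht.1 ht.2.le)

theorem integrableOn_div_one_sub_mul (hg : IntegrableOn g (Ico 0 1) μ)
    (hz : z ∈ ball (0 : ℂ) 1) :
    IntegrableOn (fun t : ℝ => g t / (1 - t * z)) (Ico 0 1) μ := by
  have hpos : 0 < 1 - ‖z‖ := sub_pos.2 (mem_ball_zero_iff.1 hz)
  refine Integrable.mono' (hg.norm.const_mul (1 - ‖z‖)⁻¹)
    (hg.aestronglyMeasurable.div₀ (Measurable.aestronglyMeasurable (by fun_prop))) ?_
  filter_upwards [ae_restrict_mem measurableSet_Ico] with t ht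
  have hdenom : 1 - ‖z‖ ≤ ‖1 - (t : ℂ) * z‖ := by
    calc 1 - ‖z‖ ≤ ‖(1 : ℂ)‖ - ‖(t : ℂ) * z‖ := by
          rw [norm_one]
          exact sub_le_sub_left (norm_ofReal_mul_le ht z) 1
      _ ≤ ‖1 - (t : ℂ) * z‖ := norm_sub_norm_le _ _
  rw [norm_div, div_eq_inv_mul]
  gcongr

theorem integrableOn_ofReal_pow_mul (hg : IntegrableOn g (Ico 0 1) μ) (n : ℕ) :
    IntegrableOn (fun t : ℝ => (t : ℂ) ^ n * g t) (Ico 0 1) μ := by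
  refine Integrable.mono hg
    ((Measurable.aestronglyMeasurable (by fun_prop)).mul hg.aestronglyMeasurable) ?_
  filter_upwards [ae_restrict_mem measurableSet_Ico] with t ht using norm_ofReal_pow_mul_le ht n _

theorem hasSum_setIntegral_pow_mul_mul_pow (hg : IntegrableOn g (Ico 0 1) μ)
    (hz : z ∈ ball (0 : ℂ) 1) :
    HasSum (fun n : ℕ => (∫ t in Ico (0 : ℝ) 1, (t : ℂ) ^ n * g t ∂μ) * z ^ n)
      (∫ t in Ico (0 : ℝ) 1, g t / (1 - t * z) ∂μ) := by
  have hz1 : ‖z‖ < 1 := mem_ball_zero_iff.1 hz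
  have hterm := integrableOn_ofReal_pow_mul hg
  have hsummable : Summable fun n : ℕ =>
      ∫ t in Ico (0 : ℝ) 1, ‖(t : ℂ) ^ n * g t * z ^ n‖ ∂μ := by
    refine Summable.of_nonneg_of_le (fun n => integral_nonneg fun t => norm_nonneg _) (fun n => ?_)
      ((summable_geometric_of_lt_one (norm_nonneg z) hz1).mul_left
        (∫ t in Ico (0 : ℝ) 1, ‖g t‖ ∂μ))
    simp_rw [norm_mul _ (z ^ n), norm_pow z]
    rw [integral_mul_const]
    gcongr ?_ * _
    exact setIntegral_mono_on (hterm n).norm hg.norm measurableSet_Ico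
      fun t ht => norm_ofReal_pow_mul_le ht n _
  have hgeom : ∀ t ∈ Ico (0 : ℝ) 1, ∑' n : ℕ, (t : ℂ) ^ n * g t * z ^ n = g t / (1 - t * z) :=
    fun t ht => by
      rw [div_eq_mul_inv,
        ← tsum_geometric_of_norm_lt_one ((norm_ofReal_mul_le ht z).trans_lt hz1), ← tsum_mul_left]
      exact tsum_congr fun n => by ring
  have hsum := hasSum_integral_of_summable_integral_norm
    (fun n => (hterm n).mul_const (z ^ n)) hsummable
  simpa only [integral_mul_const, setIntegral_congr_fun measurableSet_Ico hgeom] using hsum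

theorem natCast_mul_norm_setIntegral_pow_mul_le {C : ℝ} (hC : 0 ≤ C)
    (h : ∀ n : ℕ, 1 ≤ n →
      (∫⁻ t in Ico (0 : ℝ) 1, ENNReal.ofReal (t ^ n * ‖g t‖) ∂μ) ≤ ENNReal.ofReal (C / n)) (n : ℕ) :
    n * ‖∫ t in Ico (0 : ℝ) 1, (t : ℂ) ^ n * g t ∂μ‖ ≤ C := by
  obtain rfl | hn := Nat.eq_zero_or_pos n
  · simpa using hC
  rw [← le_div_iff₀' (by positivity)]
  calc ‖∫ t in Ico (0 : ℝ) 1, (t : ℂ) ^ n * g t ∂μ‖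
      ≤ (∫⁻ t in Ico (0 : ℝ) 1, ENNReal.ofReal ‖(t : ℂ) ^ n * g t‖ ∂μ).toReal :=
        norm_integral_le_lintegral_norm _
    _ = (∫⁻ t in Ico (0 : ℝ) 1, ENNReal.ofReal (t ^ n * ‖g t‖) ∂μ).toReal := by
        congr 1
        exact setLIntegral_congr_fun measurableSet_Ico fun t ht => by
          simp only [norm_ofReal_pow_mul ht]
    _ ≤ C / n := ENNReal.toReal_le_of_le_ofReal (by positivity) (h n hn)

end CauchyTransform

section PowerSeries

variable {a : ℕ → ℂ} {F : ℂ → ℂ}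

theorem sum_range_sq_norm_eq_circleAverage (a : ℕ → ℂ) (r : ℝ) (N : ℕ) :
    ∑ n ∈ Finset.range N, ‖a n * (r : ℂ) ^ n‖ ^ 2 =
      Real.circleAverage (fun z => ‖∑ n ∈ Finset.range N, a n * z ^ n‖ ^ 2) 0 r := by
  set p : Polynomial ℂ := ∑ n ∈ Finset.range N, Polynomial.monomial n (a n * (r : ℂ) ^ n) with hp
  have hcoeff : ∀ n, p.coeff n = if n ∈ Finset.range N then a n * (r : ℂ) ^ n else 0 := by
    simp [hp, Polynomial.coeff_monomial]
  have hsupport : p.support ⊆ Finset.range N := fun n hn => by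
    by_contra hnN
    exact Polynomial.mem_support_iff.1 hn (by rw [hcoeff, if_neg hnN])
  have heval : ∀ θ : ℝ, p.eval (circleMap 0 1 θ) =
      ∑ n ∈ Finset.range N, a n * circleMap 0 r θ ^ n := fun θ => by
    simp [hp, Polynomial.eval_finsetSum, circleMap, mul_pow, mul_assoc]
  calc ∑ n ∈ Finset.range N, ‖a n * (r : ℂ) ^ n‖ ^ 2
      = ∑ n ∈ Finset.range N, ‖p.coeff n‖ ^ 2 :=
        Finset.sum_congr rfl fun n hn => by rw [hcoeff, if_pos hn]
    _ = ∑ n ∈ p.support, ‖p.coeff n‖ ^ 2 :=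
        (Finset.sum_subset hsupport fun n _ hn => by
          rw [Polynomial.notMem_support_iff.1 hn]; simp).symm
    _ = Real.circleAverage (fun z => ‖p.eval z‖ ^ 2) 0 1 :=
        p.sum_sq_norm_coeff_eq_circleAverage
    _ = Real.circleAverage (fun z => ‖∑ n ∈ Finset.range N, a n * z ^ n‖ ^ 2) 0 r := by
        simp only [Real.circleAverage_def, heval]

theorem hasSum_sq_norm_circleAverage {r : ℝ}
    (hF : ∀ z ∈ sphere (0 : ℂ) |r|, HasSum (fun n => a n * z ^ n) (F z)) :
    HasSum (fun n => ‖a n * (r : ℂ) ^ n‖ ^ 2)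
      (Real.circleAverage (fun z => ‖F z‖ ^ 2) 0 r) := by
  have hsummable : Summable fun n => ‖a n * (r : ℂ) ^ n‖ := (hF r (by simp)).summable.norm
  have hterm : ∀ (θ : ℝ) (n : ℕ), ‖a n * circleMap 0 r θ ^ n‖ = ‖a n * (r : ℂ) ^ n‖ := by
    simp
  have hpartial : ∀ (θ : ℝ) (N : ℕ), ‖∑ n ∈ Finset.range N, a n * circleMap 0 r θ ^ n‖ ≤
      ∑' n, ‖a n * (r : ℂ) ^ n‖ := fun θ N => by
    refine (norm_sum_le _ _).trans ?_
    simp only [hterm θ]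
    exact hsummable.sum_le_tsum _ fun n _ => norm_nonneg _
  rw [hasSum_iff_tendsto_nat_of_nonneg fun n => sq_nonneg _]
  simp only [sum_range_sq_norm_eq_circleAverage, Real.circleAverage_def]
  refine (intervalIntegral.tendsto_integral_filter_of_dominated_convergence
    (fun _ => (∑' n, ‖a n * (r : ℂ) ^ n‖) ^ 2) ?_ ?_ (by simp) ?_).const_smul _
  · exact .of_forall fun N => Continuous.aestronglyMeasurable (by fun_prop)
  · refine .of_forall fun N => .of_forall fun θ _ => ?_
    rw [norm_pow, norm_norm]
    gcongr
    exact hpartial θ N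
  · exact .of_forall fun θ _ =>
      ((hF _ (circleMap_mem_sphere' 0 r θ)).tendsto_sum_nat.norm.pow 2)

variable {R : ℝ}

theorem exists_ball_norm_mul_pow_le_summable
    (hF : ∀ z ∈ ball (0 : ℂ) R, HasSum (fun n => a n * z ^ n) (F z)) {z : ℂ}
    (hz : z ∈ ball (0 : ℂ) R) :
    ∃ ρ ≤ R, z ∈ ball (0 : ℂ) ρ ∧ ∃ u : ℕ → ℝ, Summable u ∧
      ∀ n, ∀ w ∈ ball (0 : ℂ) ρ, ‖a n * w ^ n‖ ≤ u n := by
  obtain ⟨ρ, hzρ, hρR⟩ := exists_between (mem_ball_zero_iff.1 hz)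
  have hρ : ‖(ρ : ℂ)‖ = ρ := Complex.norm_of_nonneg ((norm_nonneg z).trans hzρ.le)
  refine ⟨ρ, hρR.le, mem_ball_zero_iff.2 hzρ, fun n => ‖a n * (ρ : ℂ) ^ n‖,
    (hF ρ (mem_ball_zero_iff.2 (hρ.trans_lt hρR))).summable.norm, fun n w hw => ?_⟩
  simp only [norm_mul, norm_pow, hρ]
  gcongr
  exact (mem_ball_zero_iff.1 hw).le

theorem differentiableOn_of_hasSum_pow
    (hF : ∀ z ∈ ball (0 : ℂ) R, HasSum (fun n => a n * z ^ n) (F z)) :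
    DifferentiableOn ℂ F (ball 0 R) := fun z hz => by
  obtain ⟨ρ, hρR, hzρ, u, hu, hau⟩ := exists_ball_norm_mul_pow_le_summable hF hz
  have htsum := Complex.differentiableOn_tsum_of_summable_norm hu (fun n => by fun_prop)
    isOpen_ball hau
  have heq : EqOn F (fun w => ∑' n, a n * w ^ n) (ball 0 ρ) :=
    fun w hw => (hF w (ball_subset_ball hρR hw)).tsum_eq.symm
  exact ((htsum.congr heq).differentiableAt
    (isOpen_ball.mem_nhds hzρ)).differentiableWithinAt

theorem hasSum_deriv_of_hasSum_pow
    (hF : ∀ z ∈ ball (0 : ℂ) R, HasSum (fun n => a n * z ^ n) (F z)) {z : ℂ}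
    (hz : z ∈ ball (0 : ℂ) R) :
    HasSum (fun n : ℕ => ((n + 1 : ℕ) * a (n + 1)) * z ^ n) (deriv F z) := by
  obtain ⟨ρ, hρR, hzρ, u, hu, hau⟩ := exists_ball_norm_mul_pow_le_summable hF hz
  have heq : F =ᶠ[nhds z] fun w => ∑' n, a n * w ^ n := by
    filter_upwards [isOpen_ball.mem_nhds hzρ] with w hw
    exact (hF w (ball_subset_ball hρR hw)).tsum_eq.symm
  have hderiv := Complex.hasSum_deriv_of_summable_norm hu (fun n => by fun_prop) isOpen_ball hau hzρ
  rw [← heq.deriv_eq, ← hasSum_nat_add_iff' 1] at hderiv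
  simpa [mul_comm, mul_assoc, mul_left_comm] using hderiv

end PowerSeries

section MeanLipschitz

variable {a : ℕ → ℂ} {F : ℂ → ℂ} {C : ℝ}

theorem M2_eq_sqrt_circleAverage (g : ℂ → ℂ) (r : ℝ) :
    M2 g r = Real.sqrt (Real.circleAverage (fun z => ‖g z‖ ^ 2) 0 r) := by
  simp only [M2, Real.circleAverage_def, circleMap, zero_add, smul_eq_mul]

theorem circleAverage_sq_norm_deriv_le
    (hF : ∀ z ∈ ball (0 : ℂ) 1, HasSum (fun n => a n * z ^ n) (F z))
    (ha : ∀ n : ℕ, n * ‖a n‖ ≤ C) {r : ℝ} (hr : r ∈ Ico (0 : ℝ) 1) :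
    Real.circleAverage (fun z => ‖deriv F z‖ ^ 2) 0 r ≤ C ^ 2 / (1 - r) := by
  have hparseval := hasSum_sq_norm_circleAverage (r := r) fun z hz =>
    hasSum_deriv_of_hasSum_pow hF <| mem_ball_zero_iff.2 <| by
      rw [mem_sphere_zero_iff_norm.1 hz, abs_of_nonneg hr.1]
      exact hr.2
  refine hasSum_le (fun n => ?_) hparseval
    ((hasSum_geometric_of_lt_one hr.1 hr.2).mul_left (C ^ 2))
  calc ‖((n + 1 : ℕ) * a (n + 1)) * (r : ℂ) ^ n‖ ^ 2
      = ((n + 1 : ℕ) * ‖a (n + 1)‖) ^ 2 * (r ^ n) ^ 2 := by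
        rw [norm_mul, norm_mul, norm_pow, Complex.norm_natCast, Complex.norm_of_nonneg hr.1,
          mul_pow]
    _ ≤ C ^ 2 * r ^ n := by
        gcongr
        · exact ha (n + 1)
        · exact pow_le_of_le_one (pow_nonneg hr.1 n) (pow_le_one₀ hr.1 hr.2.le) two_ne_zero

theorem memLambda_of_natCast_mul_norm_le
    (hF : ∀ z ∈ ball (0 : ℂ) 1, HasSum (fun n => a n * z ^ n) (F z))
    (ha : ∀ n : ℕ, n * ‖a n‖ ≤ C) : MemLambda F := by
  have hC : 0 ≤ C := by simpa using ha 0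
  refine ⟨differentiableOn_of_hasSum_pow hF, C, fun r hr => ?_⟩
  have hpos : 0 < 1 - r := sub_pos.2 hr.2
  rw [M2_eq_sqrt_circleAverage, ← Real.sqrt_mul hpos.le]
  refine Real.sqrt_le_iff.2 ⟨hC, ?_⟩
  rw [← le_div_iff₀' hpos]
  exact circleAverage_sq_norm_deriv_le hF ha hr

end MeanLipschitz

theorem imu_bloch_into_lambda_general (μ : Measure ℝ) (hμ : μ (Ico 0 1) ≠ ∞)
    (hmom : LogMomentBigO μ) (f : ℂ → ℂ)
    (hfm : AEStronglyMeasurable (fun t : ℝ => f t) (μ.restrict (Ico 0 1)))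
    (hf : HasLogGrowth fun t : ℝ => f t) :
    (∃ C > 0, ∀ n : ℕ, 1 ≤ n →
        (∫⁻ t in Ico (0 : ℝ) 1, ENNReal.ofReal (t ^ n * ‖f t‖) ∂μ) ≤ ENNReal.ofReal (C / n)) ∧
    (∀ z ∈ ball (0 : ℂ) 1,
        IntegrableOn (fun t : ℝ => f t / (1 - t * z)) (Ico (0 : ℝ) 1) μ ∧
        Imu μ f z = ∑' n : ℕ, (∫ t in Ico (0 : ℝ) 1, (t : ℂ) ^ n * f t ∂μ) * z ^ n) ∧
    MemLambda (Imu μ f) := by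
  have hint : IntegrableOn (fun t : ℝ => f t) (Ico 0 1) μ := hf.integrableOn hfm hμ hmom
  obtain ⟨C, hC, hmoment⟩ := hf.exists_lintegral_pow_mul_norm_le hμ hmom
  have hseries : ∀ z ∈ ball (0 : ℂ) 1,
      HasSum (fun n : ℕ => (∫ t in Ico (0 : ℝ) 1, (t : ℂ) ^ n * f t ∂μ) * z ^ n) (Imu μ f z) :=
    fun z hz => hasSum_setIntegral_pow_mul_mul_pow hint hz
  exact ⟨⟨C, hC, hmoment⟩,
    fun z hz => ⟨integrableOn_div_one_sub_mul hint hz, (hseries z hz).tsum_eq.symm⟩,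
    memLambda_of_natCast_mul_norm_le hseries
      (natCast_mul_norm_setIntegral_pow_mul_le hC.le hmoment)⟩

/-- The implication (iv) ⟹ (i) in Theorem 3.4: if the log-weighted moments of `μ` are
`O(1/n)`, then for every Bloch function `f`: (a) `∫ tⁿ |f(t)| dμ(t) = O(1/n)`,
(b) `I_μ f` is given on `𝔻` by an absolutely convergent integral which expands as a power
series with coefficients `∫ tⁿ f(t) dμ(t)`, and (c) `I_μ f ∈ Λ²_{1/2}`. -/
theorem imu_bloch_into_lambda (μ : Measure ℝ) [IsFiniteMeasure μ]
    (hsupp : μ (Ico (0:ℝ) 1)ᶜ = 0)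
    (hmom : LogMomentBigO μ)
    (f : ℂ → ℂ) (hf : MemBloch f) :
    (∃ C > 0, ∀ n : ℕ, 1 ≤ n →
        (∫⁻ t in Ico (0:ℝ) 1, ENNReal.ofReal (t ^ n * ‖f t‖) ∂μ) ≤ ENNReal.ofReal (C / n)) ∧
    (∀ z ∈ ball (0:ℂ) 1,
        IntegrableOn (fun t : ℝ => f t / (1 - t * z)) (Ico (0:ℝ) 1) μ ∧
        Imu μ f z = ∑' n : ℕ, (∫ t in Ico (0:ℝ) 1, (t : ℂ) ^ n * f t ∂μ) * z ^ n) ∧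
    MemLambda (Imu μ f) := by
  exact imu_bloch_into_lambda_general μ (measure_ne_top μ _) hmom f
    (hf.aestronglyMeasurable μ) hf.hasLogGrowth

end PaperHankel
end
end

section
/- Let μ be a finite positive Borel measure on [0,1), let μ_n denote its moments, and let F(z) = ∑_{k=1}^∞ z^k/k = log(1/(1-z)) on the unit disc 𝔻. Suppose that for every n ≥ 0 the series ∑_{k=1}^∞ μ_{n+k}/k converges, that the power series H_μ(F)(z) = ∑_{n=0}^∞ (∑_{k=1}^∞ μ_{n+k}/k) z^n has radius of convergence at least 1, and that H_μ(F) belongs to the mean Lipschitz space Λ²_{1/2}. Then ∑_{k=1}^∞ μ_{n+k}/k = ∫_{[0,1)} t^n log(1/(1-t)) dμ(t) for every n ≥ 0, and ∫_{[0,1)} t^n log(1/(1-t)) dμ(t) = O(1/n) as n → ∞. -/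
open MeasureTheory Set Metric ENNReal

noncomputable section

namespace PaperHankel

/-!
A function in `Λ²_{1/2}` is a Bloch function: by the generalized mean value property applied to
`f'²` on the circle of radius `r = (1 + |w|) / 2`, the value `|f'(w)|²` is at most a constant times
`M_2(r, f')² / (1 - |w|)`. When the Taylor coefficients `a_n` are moreover nonnegative and
decreasing, the derivative at `w ∈ [0, 1)` dominates `a_n wⁿ (1 + ⋯ + n)`, and the Bloch condition
at `w = 1 - 1 / (2n)` becomes `a_n = O(1/n)`. The coefficients `∑_k μ_{n+k}/k` are of this type,
and they are the logarithmic moments by integrating the series of `log (1 / (1 - t))` termwise.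
-/

section CircleAverage

variable {E : Type*} [NormedAddCommGroup E] [NormedSpace ℂ E]

lemma norm_circleAverage_le_circleAverage_norm (f : ℂ → E) (c : ℂ) (R : ℝ) :
    ‖Real.circleAverage f c R‖ ≤ Real.circleAverage (fun z ↦ ‖f z‖) c R := by
  simp only [Real.circleAverage_def, norm_smul, smul_eq_mul, norm_inv,
    Real.norm_of_nonneg Real.two_pi_pos.le]
  gcongr
  exact intervalIntegral.norm_integral_le_integral_norm Real.two_pi_pos.le

lemma norm_le_mul_circleAverage_norm [CompleteSpace E] {f : ℂ → E} {c w : ℂ} {R : ℝ}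
    (hf : DiffContOnCl ℂ f (ball c R)) (hw : w ∈ ball c R) :
    ‖f w‖ ≤ R / (R - dist w c) * Real.circleAverage (fun z ↦ ‖f z‖) c R := by
  have hwR : dist w c < R := mem_ball.mp hw
  have hR : 0 < R := dist_nonneg.trans_lt hwR
  rw [← abs_of_pos hR] at hf hw
  have hcont : ContinuousOn f (sphere c |R|) :=
    hf.continuousOn_ball.mono sphere_subset_closedBall
  have hne : ∀ z ∈ sphere c |R|, z - w ≠ 0 := fun z hz hzw ↦ by
    rw [sub_eq_zero.mp hzw] at hz
    exact (mem_ball.mp hw).ne (mem_sphere.mp hz)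
  have hkernel : ∀ z ∈ sphere c |R|,
      ‖((z - c) / (z - w)) • f z‖ ≤ R / (R - dist w c) * ‖f z‖ := fun z hz ↦ by
    have hzc : ‖z - c‖ = R := by rw [← dist_eq_norm, mem_sphere.mp hz, abs_of_pos hR]
    have hzw : R - dist w c ≤ ‖z - w‖ := by
      rw [← hzc, dist_eq_norm]
      simpa only [sub_sub_sub_cancel_right] using norm_sub_norm_le (z - c) (w - c)
    rw [norm_smul, norm_div, hzc]
    have : 0 < R - dist w c := sub_pos.mpr hwR
    gcongr
  calc ‖f w‖ = ‖Real.circleAverage (fun z ↦ ((z - c) / (z - w)) • f z) c R‖ := by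
        rw [hf.circleAverage_smul_div hw]
    _ ≤ Real.circleAverage (fun z ↦ ‖((z - c) / (z - w)) • f z‖) c R :=
        norm_circleAverage_le_circleAverage_norm _ c R
    _ ≤ Real.circleAverage (fun z ↦ R / (R - dist w c) * ‖f z‖) c R := by
        refine Real.circleAverage_mono ?_ ?_ hkernel
        · exact (((continuousOn_id.sub continuousOn_const).div
            (continuousOn_id.sub continuousOn_const) hne).smul hcont).norm.circleIntegrable'
        · exact (continuousOn_const.mul hcont.norm).circleIntegrable'
    _ = R / (R - dist w c) * Real.circleAverage (fun z ↦ ‖f z‖) c R :=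
        Real.circleAverage_fun_smul (a := R / (R - dist w c))

end CircleAverage

lemma M2_sq (g : ℂ → ℂ) (r : ℝ) :
    M2 g r ^ 2 = Real.circleAverage (fun z ↦ ‖g z‖ ^ 2) 0 r := by
  have hM2 : M2 g r = √(Real.circleAverage (fun z ↦ ‖g z‖ ^ 2) 0 r) := by
    simp only [M2, Real.circleAverage_def, circleMap_zero, smul_eq_mul]
  rw [hM2, Real.sq_sqrt (Real.circleAverage_nonneg_of_nonneg fun z _ ↦ sq_nonneg ‖g z‖)]

lemma norm_sq_le_mul_M2_sq {g : ℂ → ℂ} {r : ℝ} {w : ℂ} (hg : DiffContOnCl ℂ g (ball 0 r))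
    (hw : w ∈ ball 0 r) : ‖g w‖ ^ 2 ≤ r / (r - ‖w‖) * M2 g r ^ 2 := by
  have hgg : DiffContOnCl ℂ (fun z ↦ g z ^ 2) (ball 0 r) := by
    simpa only [sq, smul_eq_mul] using hg.smul hg
  simpa only [norm_pow, dist_zero_right, M2_sq] using norm_le_mul_circleAverage_norm hgg hw

lemma one_sub_norm_mul_norm_deriv_le {f : ℂ → ℂ} {C : ℝ}
    (hf : DifferentiableOn ℂ f (ball 0 1))
    (hC : ∀ r ∈ Ico (0 : ℝ) 1, √(1 - r) * M2 (deriv f) r ≤ C) {w : ℂ} (hw : w ∈ ball 0 1) :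
    (1 - ‖w‖) * ‖deriv f w‖ ≤ 2 * C := by
  have hw1 : ‖w‖ < 1 := mem_ball_zero_iff.mp hw
  have hw0 : 0 ≤ ‖w‖ := norm_nonneg w
  obtain ⟨r, hr⟩ : ∃ r : ℝ, r = (1 + ‖w‖) / 2 := ⟨_, rfl⟩
  have hr0 : 0 ≤ r := by linarith
  have hr1 : 0 < 1 - r := by linarith
  have hrw : r - ‖w‖ = 1 - r := by linarith
  have hCr : √(1 - r) * M2 (deriv f) r ≤ C := hC r ⟨hr0, by linarith⟩
  have hpoint : ‖deriv f w‖ ^ 2 ≤ r / (1 - r) * M2 (deriv f) r ^ 2 := by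
    rw [← hrw]
    refine norm_sq_le_mul_M2_sq ?_ (mem_ball_zero_iff.mpr (by linarith))
    exact ((hf.deriv isOpen_ball).mono (closedBall_subset_ball (by linarith))).diffContOnCl_ball
      Subset.rfl
  have hsq : ((1 - r) * ‖deriv f w‖) ^ 2 ≤ C ^ 2 :=
    calc ((1 - r) * ‖deriv f w‖) ^ 2 = (1 - r) ^ 2 * ‖deriv f w‖ ^ 2 := mul_pow ..
      _ ≤ (1 - r) ^ 2 * (r / (1 - r) * M2 (deriv f) r ^ 2) := by gcongr
      _ = r * (√(1 - r) * M2 (deriv f) r) ^ 2 := by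
          rw [mul_pow, Real.sq_sqrt hr1.le]
          field_simp
      _ ≤ 1 * (√(1 - r) * M2 (deriv f) r) ^ 2 := by gcongr; linarith
      _ ≤ C ^ 2 := by
          rw [one_mul]
          have : 0 ≤ M2 (deriv f) r := Real.sqrt_nonneg _
          gcongr
  have hC0 : 0 ≤ C := le_trans (mul_nonneg (Real.sqrt_nonneg _) (Real.sqrt_nonneg _)) hCr
  have hroot : (1 - r) * ‖deriv f w‖ ≤ C := le_of_sq_le_sq hsq hC0
  calc (1 - ‖w‖) * ‖deriv f w‖ = 2 * ((1 - r) * ‖deriv f w‖) := by rw [hr]; ring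
    _ ≤ 2 * C := by gcongr

lemma MemLambda.memBloch {f : ℂ → ℂ} (hf : MemLambda f) : MemBloch f := by
  obtain ⟨hdiff, C, hC⟩ := hf
  refine ⟨hdiff, 2 * (2 * C), fun z hz ↦ ?_⟩
  have hz1 : ‖z‖ < 1 := mem_ball_zero_iff.mp hz
  calc (1 - ‖z‖ ^ 2) * ‖deriv f z‖ = (1 + ‖z‖) * ((1 - ‖z‖) * ‖deriv f z‖) := by ring
    _ ≤ 2 * ((1 - ‖z‖) * ‖deriv f z‖) := by
        have : 0 ≤ 1 - ‖z‖ := by linarith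
        gcongr
        linarith
    _ ≤ 2 * (2 * C) := by
        gcongr 2 * ?_
        exact one_sub_norm_mul_norm_deriv_le hdiff hC hz

lemma hasSum_deriv_tsum_mul_pow {c : ℕ → ℂ} {ρ : ℝ} {w : ℂ}
    (hc : Summable fun n ↦ ‖c n‖ * ρ ^ n) (hw : ‖w‖ < ρ) :
    HasSum (fun n : ℕ ↦ c n * (n * w ^ (n - 1))) (deriv (fun z ↦ ∑' n, c n * z ^ n) w) := by
  have hbound : ∀ n, ∀ z ∈ ball (0 : ℂ) ρ, ‖c n * z ^ n‖ ≤ ‖c n‖ * ρ ^ n := fun n z hz ↦ by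
    rw [norm_mul, norm_pow]
    gcongr
    exact (mem_ball_zero_iff.mp hz).le
  simpa using Complex.hasSum_deriv_of_summable_norm hc (fun n ↦ by fun_prop) isOpen_ball hbound
    (mem_ball_zero_iff.mpr hw)

lemma mul_pow_mul_sum_range_le_of_hasSum {a : ℕ → ℝ} (ha0 : ∀ n, 0 ≤ a n) (ha : Antitone a)
    {w S : ℝ} (hw0 : 0 ≤ w) (hw1 : w ≤ 1)
    (hS : HasSum (fun n : ℕ ↦ a n * (n * w ^ (n - 1))) S) (N : ℕ) :
    a N * w ^ N * ∑ n ∈ Finset.range (N + 1), (n : ℝ) ≤ S := by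
  have hterm : ∀ n ∈ Finset.range (N + 1), a N * w ^ N * n ≤ a n * (n * w ^ (n - 1)) := by
    intro n hn
    have hnN : n ≤ N := Finset.mem_range_succ_iff.mp hn
    have hcoeff : a N ≤ a n := ha hnN
    have hpow : w ^ N ≤ w ^ (n - 1) := pow_le_pow_of_le_one hw0 hw1 (by lia)
    have := ha0 n
    calc a N * w ^ N * n ≤ a n * w ^ (n - 1) * n := by gcongr
      _ = a n * (n * w ^ (n - 1)) := by ring
  rw [Finset.mul_sum]
  refine (Finset.sum_le_sum hterm).trans (sum_le_hasSum _ (fun n _ ↦ ?_) hS)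
  have := ha0 n
  positivity

lemma hasSum_norm_deriv_tsum_mul_pow_of_antitone {a : ℕ → ℝ} (ha0 : ∀ n, 0 ≤ a n) (ha : Antitone a)
    {w : ℝ} (hw0 : 0 ≤ w) (hw1 : w < 1) :
    HasSum (fun n : ℕ ↦ a n * (n * w ^ (n - 1)))
      ‖deriv (fun z : ℂ ↦ ∑' n, (a n : ℂ) * z ^ n) w‖ := by
  obtain ⟨ρ, hwρ, hρ1⟩ := exists_between hw1
  have hρ0 : 0 ≤ ρ := hw0.trans hwρ.le
  have hsummable : Summable fun n ↦ ‖(a n : ℂ)‖ * ρ ^ n := by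
    refine ((summable_geometric_of_lt_one hρ0 hρ1).mul_left (a 0)).of_nonneg_of_le
      (fun n ↦ by positivity) fun n ↦ ?_
    rw [Complex.norm_of_nonneg (ha0 n)]
    gcongr
    exact ha n.zero_le
  have hcomplex := hasSum_deriv_tsum_mul_pow hsummable
    (w := (w : ℂ)) (by rwa [Complex.norm_of_nonneg hw0])
  have hreal : HasSum (fun n : ℕ ↦ ((a n * (n * w ^ (n - 1)) : ℝ) : ℂ))
      (deriv (fun z : ℂ ↦ ∑' n, (a n : ℂ) * z ^ n) w) := by
    simpa only [Complex.ofReal_mul, Complex.ofReal_natCast, Complex.ofReal_pow] using hcomplex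
  have hnonneg : ∀ n : ℕ, 0 ≤ a n * (n * w ^ (n - 1)) := fun n ↦ by
    have := ha0 n
    positivity
  have hsum := Complex.summable_ofReal.mp hreal.summable
  rw [← hreal.tsum_eq, ← Complex.ofReal_tsum, Complex.norm_of_nonneg (tsum_nonneg hnonneg)]
  exact hsum.hasSum

lemma mul_pow_mul_sq_div_two_le_norm_deriv {a : ℕ → ℝ} (ha0 : ∀ n, 0 ≤ a n) (ha : Antitone a)
    {w : ℝ} (hw0 : 0 ≤ w) (hw1 : w < 1) (N : ℕ) :
    a N * w ^ N * (N ^ 2 / 2) ≤ ‖deriv (fun z : ℂ ↦ ∑' n, (a n : ℂ) * z ^ n) w‖ := by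
  have hgauss : (∑ n ∈ Finset.range (N + 1), (n : ℝ)) * 2 = (N + 1) * N := by
    rw [← Nat.cast_sum]
    exact_mod_cast Finset.sum_range_id_mul_two (N + 1)
  have haN : 0 ≤ a N := ha0 N
  refine le_trans ?_ (mul_pow_mul_sum_range_le_of_hasSum ha0 ha hw0 hw1.le
    (hasSum_norm_deriv_tsum_mul_pow_of_antitone ha0 ha hw0 hw1) N)
  gcongr
  linarith [N.cast_nonneg (α := ℝ)]

lemma exists_le_div_of_memBloch {a : ℕ → ℝ} (ha0 : ∀ n, 0 ≤ a n) (ha : Antitone a)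
    (hf : MemBloch fun z ↦ ∑' n, (a n : ℂ) * z ^ n) :
    ∃ C > 0, ∀ n : ℕ, 1 ≤ n → a n ≤ C / n := by
  obtain ⟨-, M, hM⟩ := hf
  have hM0 : 0 ≤ M := le_trans (by simp) (hM 0 (mem_ball_self one_pos))
  refine ⟨8 * M + 1, by positivity, fun n hn ↦ ?_⟩
  have hn1 : (1 : ℝ) ≤ n := by exact_mod_cast hn
  have han : 0 ≤ a n := ha0 n
  obtain ⟨w, hw⟩ : ∃ w : ℝ, w = 1 - 1 / (2 * n) := ⟨_, rfl⟩
  have hgap : 1 / (2 * (n : ℝ)) ≤ 1 / 2 := by gcongr; linarith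
  have hgap0 : 0 < 1 / (2 * (n : ℝ)) := by positivity
  have hw0 : 0 ≤ w := by linarith
  have hw1 : w < 1 := by linarith
  have hpow : 1 / 2 ≤ w ^ n :=
    calc (1 : ℝ) / 2 = 1 + n * (w - 1) := by rw [hw]; field_simp; norm_num
      _ ≤ w ^ n := one_add_mul_sub_le_pow (by linarith) n
  obtain ⟨D, hD⟩ : ∃ D, D = ‖deriv (fun z : ℂ ↦ ∑' n, (a n : ℂ) * z ^ n) w‖ := ⟨_, rfl⟩
  have hlower : a n * (1 / 2) * (n ^ 2 / 2) ≤ D := by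
    refine le_trans ?_ (hD ▸ mul_pow_mul_sq_div_two_le_norm_deriv ha0 ha hw0 hw1 n)
    gcongr
  have hupper : 1 / (2 * n) * D ≤ M := by
    have hBloch := hM w (by simpa [abs_of_nonneg hw0] using hw1)
    rw [Complex.norm_of_nonneg hw0, ← hD] at hBloch
    refine le_trans ?_ hBloch
    gcongr
    · exact hD ▸ norm_nonneg _
    · nlinarith
  rw [le_div_iff₀ (by positivity)]
  calc a n * n = 8 * (1 / (2 * n) * (a n * (1 / 2) * (n ^ 2 / 2))) := by field_simp; norm_num
    _ ≤ 8 * (1 / (2 * n) * D) := by gcongr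
    _ ≤ 8 * M + 1 := by linarith

lemma mom_nonneg (μ : Measure ℝ) (n : ℕ) : 0 ≤ mom μ n :=
  setIntegral_nonneg measurableSet_Ico fun _ ht ↦ pow_nonneg ht.1 n

/-- The `n`-th Taylor coefficient `∑_{k ≥ 1} μ_{n+k} / k` of `H_μ(F)`, where
`F(z) = log (1 / (1 - z))`; the sum is indexed by `k - 1`. -/
def hmuLogCoeff (μ : Measure ℝ) (n : ℕ) : ℝ :=
  ∑' k : ℕ, mom μ (n + (k + 1)) / ((k : ℝ) + 1)

lemma hmuLogCoeff_nonneg (μ : Measure ℝ) (n : ℕ) : 0 ≤ hmuLogCoeff μ n :=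
  tsum_nonneg fun k ↦ div_nonneg (mom_nonneg μ _) (by positivity)

lemma hasSum_pow_mul_log {t : ℝ} (ht : |t| < 1) (n : ℕ) :
    HasSum (fun k : ℕ ↦ t ^ (n + (k + 1)) / ((k : ℝ) + 1)) (t ^ n * Real.log (1 / (1 - t))) := by
  rw [one_div, Real.log_inv]
  simpa only [pow_add _ n, mul_div_assoc] using
    (Real.hasSum_pow_div_log_of_abs_lt_one ht).mul_left (t ^ n)

lemma pow_mul_log_nonneg {t : ℝ} (ht : t ∈ Ico (0 : ℝ) 1) (n : ℕ) :
    0 ≤ t ^ n * Real.log (1 / (1 - t)) :=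
  (hasSum_pow_mul_log (by rw [abs_of_nonneg ht.1]; exact ht.2) n).nonneg
    fun k ↦ div_nonneg (pow_nonneg ht.1 _) (by positivity)

section Moments

variable {μ : Measure ℝ}

lemma integrableOn_pow_of_le {m n : ℕ} (hmn : m ≤ n)
    (hm : IntegrableOn (fun t : ℝ ↦ t ^ m) (Ico 0 1) μ) :
    IntegrableOn (fun t : ℝ ↦ t ^ n) (Ico 0 1) μ := by
  refine hm.mono' (by fun_prop) ?_
  filter_upwards [ae_restrict_mem measurableSet_Ico] with t ht
  rw [Real.norm_of_nonneg (pow_nonneg ht.1 n)]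
  exact pow_le_pow_of_le_one ht.1 ht.2.le hmn

lemma mom_le_mom {m n : ℕ} (hmn : m ≤ n)
    (hm : IntegrableOn (fun t : ℝ ↦ t ^ m) (Ico 0 1) μ) : mom μ n ≤ mom μ m :=
  setIntegral_mono_on (integrableOn_pow_of_le hmn hm) hm measurableSet_Ico
    fun _ ht ↦ pow_le_pow_of_le_one ht.1 ht.2.le hmn

lemma integrableOn_pow_add_succ (hμ : IntegrableOn (fun t : ℝ ↦ t) (Ico 0 1) μ) (n k : ℕ) :
    IntegrableOn (fun t : ℝ ↦ t ^ (n + (k + 1))) (Ico 0 1) μ :=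
  integrableOn_pow_of_le (m := 1) (by lia) (by simpa only [pow_one] using hμ)

lemma mom_add_succ_div_le (hμ : IntegrableOn (fun t : ℝ ↦ t) (Ico 0 1) μ)
    {m n : ℕ} (hmn : m ≤ n) (k : ℕ) :
    mom μ (n + (k + 1)) / ((k : ℝ) + 1) ≤ mom μ (m + (k + 1)) / ((k : ℝ) + 1) := by
  gcongr
  exact mom_le_mom (by lia) (integrableOn_pow_add_succ hμ m k)

lemma summable_mom_add_succ_div (hμ : IntegrableOn (fun t : ℝ ↦ t) (Ico 0 1) μ)
    (hsum : Summable fun k : ℕ ↦ mom μ (k + 1) / ((k : ℝ) + 1)) (n : ℕ) :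
    Summable fun k : ℕ ↦ mom μ (n + (k + 1)) / ((k : ℝ) + 1) :=
  hsum.of_nonneg_of_le (fun k ↦ div_nonneg (mom_nonneg μ _) (by positivity))
    fun k ↦ by simpa only [zero_add] using mom_add_succ_div_le hμ n.zero_le k

lemma antitone_hmuLogCoeff (hμ : IntegrableOn (fun t : ℝ ↦ t) (Ico 0 1) μ)
    (hsum : Summable fun k : ℕ ↦ mom μ (k + 1) / ((k : ℝ) + 1)) : Antitone (hmuLogCoeff μ) :=
  fun m n hmn ↦ (summable_mom_add_succ_div hμ hsum n).tsum_le_tsum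
    (mom_add_succ_div_le hμ hmn) (summable_mom_add_succ_div hμ hsum m)

lemma lintegral_pow_add_succ_div (hμ : IntegrableOn (fun t : ℝ ↦ t) (Ico 0 1) μ) (n k : ℕ) :
    ∫⁻ t in Ico (0 : ℝ) 1, ENNReal.ofReal (t ^ (n + (k + 1)) / ((k : ℝ) + 1)) ∂μ =
      ENNReal.ofReal (mom μ (n + (k + 1)) / ((k : ℝ) + 1)) := by
  rw [← ofReal_integral_eq_lintegral_ofReal ((integrableOn_pow_add_succ hμ n k).div_const _),
    integral_div, mom]
  filter_upwards [ae_restrict_mem measurableSet_Ico] with t ht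
  exact div_nonneg (pow_nonneg ht.1 _) (by positivity)

lemma lintegral_pow_mul_log (hμ : IntegrableOn (fun t : ℝ ↦ t) (Ico 0 1) μ)
    {n : ℕ} (hsum : Summable fun k : ℕ ↦ mom μ (n + (k + 1)) / ((k : ℝ) + 1)) :
    ∫⁻ t in Ico (0 : ℝ) 1, ENNReal.ofReal (t ^ n * Real.log (1 / (1 - t))) ∂μ =
      ENNReal.ofReal (hmuLogCoeff μ n) := by
  have hseries : ∀ t ∈ Ico (0 : ℝ) 1, ENNReal.ofReal (t ^ n * Real.log (1 / (1 - t))) =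
      ∑' k : ℕ, ENNReal.ofReal (t ^ (n + (k + 1)) / ((k : ℝ) + 1)) := fun t ht ↦ by
    have hs := hasSum_pow_mul_log (by rw [abs_of_nonneg ht.1]; exact ht.2) n
    rw [← hs.tsum_eq]
    exact ENNReal.ofReal_tsum_of_nonneg
      (fun k ↦ div_nonneg (pow_nonneg ht.1 _) (by positivity)) hs.summable
  calc ∫⁻ t in Ico (0 : ℝ) 1, ENNReal.ofReal (t ^ n * Real.log (1 / (1 - t))) ∂μ
      = ∫⁻ t in Ico (0 : ℝ) 1,
          ∑' k : ℕ, ENNReal.ofReal (t ^ (n + (k + 1)) / ((k : ℝ) + 1)) ∂μ :=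
        setLIntegral_congr_fun measurableSet_Ico hseries
    _ = ∑' k : ℕ, ENNReal.ofReal (mom μ (n + (k + 1)) / ((k : ℝ) + 1)) := by
        rw [lintegral_tsum fun k ↦ by fun_prop]
        exact tsum_congr (lintegral_pow_add_succ_div hμ n)
    _ = ENNReal.ofReal (hmuLogCoeff μ n) :=
        (ENNReal.ofReal_tsum_of_nonneg (fun k ↦ div_nonneg (mom_nonneg μ _) (by positivity))
          hsum).symm

lemma hmuLogCoeff_eq_integral (hμ : IntegrableOn (fun t : ℝ ↦ t) (Ico 0 1) μ)
    {n : ℕ} (hsum : Summable fun k : ℕ ↦ mom μ (n + (k + 1)) / ((k : ℝ) + 1)) :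
    hmuLogCoeff μ n = ∫ t in Ico (0 : ℝ) 1, t ^ n * Real.log (1 / (1 - t)) ∂μ := by
  have hnonneg : 0 ≤ᵐ[μ.restrict (Ico 0 1)] fun t : ℝ ↦ t ^ n * Real.log (1 / (1 - t)) := by
    filter_upwards [ae_restrict_mem measurableSet_Ico] with t ht using pow_mul_log_nonneg ht n
  have hmeas : Measurable fun t : ℝ ↦ t ^ n * Real.log (1 / (1 - t)) := by fun_prop
  rw [integral_eq_lintegral_of_nonneg_ae hnonneg hmeas.aestronglyMeasurable,
    lintegral_pow_mul_log hμ hsum, ENNReal.toReal_ofReal (hmuLogCoeff_nonneg μ n)]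

end Moments

theorem hmu_logF_in_lambda_general (μ : Measure ℝ)
    (hμ : IntegrableOn (fun t : ℝ ↦ t) (Ico 0 1) μ)
    (hsum : Summable fun k : ℕ ↦ mom μ (k + 1) / ((k : ℝ) + 1))
    (hBloch : MemBloch fun z ↦ ∑' n, (hmuLogCoeff μ n : ℂ) * z ^ n) :
    (∀ n : ℕ, hmuLogCoeff μ n = ∫ t in Ico (0 : ℝ) 1, t ^ n * Real.log (1 / (1 - t)) ∂μ) ∧
      LogMomentBigO μ := by
  have hsum_add := summable_mom_add_succ_div hμ hsum
  refine ⟨fun n ↦ hmuLogCoeff_eq_integral hμ (hsum_add n), ?_⟩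
  obtain ⟨C, hC, hbound⟩ := exists_le_div_of_memBloch (hmuLogCoeff_nonneg μ)
    (antitone_hmuLogCoeff hμ hsum) hBloch
  refine ⟨C, hC, fun n hn ↦ ?_⟩
  rw [lintegral_pow_mul_log hμ (hsum_add n)]
  exact ENNReal.ofReal_le_ofReal (hbound n hn)

/-- The implication (ii) ⟹ (iv) in Theorem 3.4: if `H_μ(F)`, for
`F(z) = ∑_{k≥1} z^k/k = log(1/(1-z))`, is well defined and belongs to `Λ²_{1/2}`, then
`∑_{k≥1} μ_{n+k}/k = ∫_{[0,1)} tⁿ log(1/(1-t)) dμ(t)` and this quantity is `O(1/n)`. -/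
theorem hmu_logF_in_lambda (μ : Measure ℝ) [IsFiniteMeasure μ]
    (hsupp : μ (Ico (0:ℝ) 1)ᶜ = 0)
    (hsum : ∀ n : ℕ, Summable fun k : ℕ => mom μ (n + (k + 1)) / ((k : ℝ) + 1))
    (hrad : ∀ z ∈ ball (0:ℂ) 1, Summable fun n : ℕ =>
      ‖((∑' k : ℕ, mom μ (n + (k + 1)) / ((k : ℝ) + 1) : ℝ) : ℂ) * z ^ n‖)
    (hmem : MemLambda fun z : ℂ => ∑' n : ℕ,
      ((∑' k : ℕ, mom μ (n + (k + 1)) / ((k : ℝ) + 1) : ℝ) : ℂ) * z ^ n) :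
    (∀ n : ℕ, (∑' k : ℕ, mom μ (n + (k + 1)) / ((k : ℝ) + 1)) =
        ∫ t in Ico (0:ℝ) 1, t ^ n * Real.log (1 / (1 - t)) ∂μ) ∧
    LogMomentBigO μ := by
  exact hmu_logF_in_lambda_general μ
    (continuousOn_id.integrableOn_Icc.mono_set Ico_subset_Icc_self)
    (by simpa only [zero_add] using hsum 0) hmem.memBloch

end PaperHankel
end
end
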